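/- Let K be a weak-star compact subset of the space of finite signed regular Borel measures on a compact metric space X, symmetric about 0 and convex. Suppose Y is an (M+1)-dimensional subspace of measures and ρ > 0 is such that every μ ∈ Y with |||μ||| ≤ ρ lies in K, where |||·||| is a norm on measures continuous with respect to weak-star convergence on bounded sets. Then for every continuous map S : K → ℝ^M and every map A : ℝ^M → (measures), one has sup_{μ ∈ K} |||A(S(μ)) − μ||| ≥ ρ. -/

import Mathlib

open MeasureTheory

/-- Integral of a function against a finite signed measure, via the Jordan decomposition. -/
noncomputable def sint {X : Type*} [MeasurableSpace X] (s : SignedMeasure X) (f : X → ℝ) : ℝ :=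
  (∫ x, f x ∂s.toJordanDecomposition.posPart) - ∫ x, f x ∂s.toJordanDecomposition.negPart

/-- The weak-star topology on finite signed Borel measures, induced by duality with
continuous functions. -/
noncomputable def wstar (X : Type*) [MeasurableSpace X] [TopologicalSpace X] :
    TopologicalSpace (SignedMeasure X) :=
  TopologicalSpace.induced (fun s => fun g : C(X, ℝ) => sint s (fun x => g x)) inferInstance

/-!
A system of `n` real polynomial equations in `n` unknowns with leading terms `X i ^ d i` in general
position has a quotient algebra of dimension `∏ i, d i`. If all `d i` are odd, so is this dimension,
and since the residue fields `ℂ` contribute even dimensions, there is a real solution. Applied to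
dehomogenised odd forms and passed to the limit by Stone–Weierstrass, this gives the Borsuk–Ulam
theorem.

On the sphere of radius `ρ` in `Y`, Borsuk–Ulam for `s ↦ S s - S (-s)` yields `s` with
`S s = S (-s)`. The points `s` and `-s` are at distance `2ρ` and share the reconstruction
`A (S s)`, which therefore lies at distance at least `ρ` from one of them.
-/

open Module MvPolynomial

/-! ### Real points of algebras of odd dimension -/

theorem finrank_quotient_lt_of_ne_bot {k A : Type*} [Field k] [CommRing A] [Algebra k A]
    [Module.Finite k A] {I : Ideal A} (hI : I ≠ ⊥) : finrank k (A ⧸ I) < finrank k A := by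
  have : Nontrivial (I.restrictScalars k) := Submodule.nontrivial_iff_ne_bot.2 (by simpa using hI)
  have hpos : 0 < finrank k (I.restrictScalars k) := finrank_pos
  have := (I.restrictScalars k).finrank_quotient_add_finrank
  change finrank k (A ⧸ I) + _ = _ at this
  omega

theorem finrank_quotient_span_add_finrank_quotient_torsionOf {k A : Type*} [Field k] [CommRing A]
    [Algebra k A] [Module.Finite k A] (x : A) :
    finrank k (A ⧸ Ideal.span {x}) + finrank k (A ⧸ Ideal.torsionOf A A x) = finrank k A := by
  rw [((Ideal.quotTorsionOfEquivSpanSingleton A A x).restrictScalars k).finrank_eq]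
  exact ((Ideal.span {x}).restrictScalars k).finrank_quotient_add_finrank

theorem nonempty_algHom_real_of_odd_finrank (A : Type*) [CommRing A] [Algebra ℝ A]
    (hA : Odd (finrank ℝ A)) : Nonempty (A →ₐ[ℝ] ℝ) := by
  induction hd : finrank ℝ A using Nat.strong_induction_on generalizing A with
  | _ d ih =>
  have : Module.Finite ℝ A := finite_of_finrank_pos hA.pos
  have : Nontrivial A := nontrivial_of_finrank_pos hA.pos
  have of_quotient (I : Ideal A) (hI : I ≠ ⊥) (hodd : Odd (finrank ℝ (A ⧸ I))) :
      Nonempty (A →ₐ[ℝ] ℝ) := by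
    obtain ⟨φ⟩ := ih _ (hd ▸ finrank_quotient_lt_of_ne_bot hI) (A ⧸ I) hodd rfl
    exact ⟨φ.comp (Ideal.Quotient.mkₐ ℝ I)⟩
  by_cases hfield : IsField A
  · let := hfield.toField
    rcases Real.nonempty_algEquiv_or A with ⟨⟨e⟩⟩ | ⟨⟨e⟩⟩
    · exact ⟨e⟩
    · rw [e.toLinearEquiv.finrank_eq, Complex.finrank_real_complex] at hA
      exact absurd hA (by decide)
  obtain ⟨x, hx0, hx⟩ := Ring.exists_not_isUnit_of_not_isField hfield
  have hspan : Ideal.span {x} ≠ ⊥ := by simpa using hx0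
  have htorsion : Ideal.torsionOf A A x ≠ ⊥ := fun h => by
    have hinj : Function.Injective (LinearMap.mulRight ℝ x) :=
      LinearMap.ker_eq_bot.1 (LinearMap.ker_eq_bot'.2 fun a ha => by
        have : a ∈ Ideal.torsionOf A A x := ha
        simpa [h] using this)
    obtain ⟨y, hy⟩ := LinearMap.surjective_of_injective hinj 1
    exact hx (.of_mul_eq_one_right y hy)
  rw [← finrank_quotient_span_add_finrank_quotient_torsionOf x, Nat.odd_add] at hA
  rcases Nat.even_or_odd (finrank ℝ (A ⧸ Ideal.span {x})) with heven | hodd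
  · refine of_quotient _ htorsion (Nat.not_even_iff_odd.1 fun h => ?_)
    exact Nat.not_odd_iff_even.2 heven (hA.2 h)
  · exact of_quotient _ hspan hodd

/-! ### Polynomial systems in general position -/

section adicMonomial

variable {σ R : Type*} [Fintype σ] [CommRing R]

/-- The `g`-adic analogue of the monomial `X ^ s`: each block `X i ^ d i` in `X ^ s` is replaced by
`g i`. It serves as a basis of the polynomial ring adapted to the ideal generated by `g`. -/
noncomputable def adicMonomial (d : σ → ℕ) (g : σ → MvPolynomial σ R) (s : σ →₀ ℕ) :
    MvPolynomial σ R :=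
  ∏ i, X i ^ (s i % d i) * g i ^ (s i / d i)

theorem adicMonomial_X_pow (d : σ → ℕ) (s : σ →₀ ℕ) :
    adicMonomial d (fun i => (X i ^ d i : MvPolynomial σ R)) s = monomial s 1 := by
  rw [monomial_eq, C_1, one_mul, Finsupp.prod_fintype _ _ fun _ => pow_zero _]
  exact Finset.prod_congr rfl fun i _ => by rw [← pow_mul, ← pow_add, Nat.mod_add_div]

theorem map_adicMonomial {S : Type*} [CommRing S] (φ : R →+* S) (d : σ → ℕ)
    (g : σ → MvPolynomial σ R) (s : σ →₀ ℕ) :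
    map φ (adicMonomial d g s) = adicMonomial d (fun i => map φ (g i)) s := by
  simp [adicMonomial]

theorem totalDegree_adicMonomial_le {d : σ → ℕ} {g : σ → MvPolynomial σ R}
    (hg : ∀ i, (g i).totalDegree ≤ d i) (s : σ →₀ ℕ) :
    (adicMonomial d g s).totalDegree ≤ s.degree := by
  rw [Finsupp.degree_eq_sum]
  refine (totalDegree_finsetProd _ _).trans (Finset.sum_le_sum fun i _ => ?_)
  calc (X i ^ (s i % d i) * g i ^ (s i / d i)).totalDegree
      ≤ (X i ^ (s i % d i) : MvPolynomial σ R).totalDegree + (g i ^ (s i / d i)).totalDegree :=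
        totalDegree_mul _ _
    _ ≤ s i % d i + s i / d i * d i := by
        gcongr
        · simpa [X_pow_eq_monomial] using
            totalDegree_monomial_le (R := R) (Finsupp.single i (s i % d i)) 1
        · exact (totalDegree_pow _ _).trans (Nat.mul_le_mul_left _ (hg i))
    _ = s i := Nat.mod_add_div' _ _

theorem mul_adicMonomial {d : σ → ℕ} {i : σ} (hd : 0 < d i) (g : σ → MvPolynomial σ R)
    (s : σ →₀ ℕ) :
    g i * adicMonomial d g s = adicMonomial d g (s + Finsupp.single i (d i)) := by
  classical
  rw [adicMonomial, adicMonomial, ← Finset.mul_prod_erase _ _ (Finset.mem_univ i),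
    ← Finset.mul_prod_erase _ _ (Finset.mem_univ i), ← mul_assoc]
  congr 1
  · rw [Finsupp.add_apply, Finsupp.single_eq_same, Nat.add_mod_right, Nat.add_div_right _ hd]
    ring
  · refine Finset.prod_congr rfl fun j hj => ?_
    rw [Finsupp.add_apply, Finsupp.single_eq_of_ne (Finset.ne_of_mem_erase hj), add_zero]

theorem adicMonomial_mem_span {d : σ → ℕ} {i : σ} (hd : 0 < d i) (g : σ → MvPolynomial σ R)
    {s : σ →₀ ℕ} (hs : d i ≤ s i) : adicMonomial d g s ∈ Ideal.span (Set.range g) := by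
  rw [← tsub_add_cancel_of_le (Finsupp.single_le_iff.2 hs), ← mul_adicMonomial hd]
  exact Ideal.mul_mem_right _ _ (Ideal.subset_span ⟨i, rfl⟩)

/-- The `g`-adic monomials form a basis of the polynomial ring over its coefficients. This is the
general position condition under which `g` has a quotient algebra of dimension `∏ i, d i`. -/
def IsAdicBasis (d : σ → ℕ) (g : σ → MvPolynomial σ R) : Prop :=
  LinearIndependent R (adicMonomial d g) ∧ Submodule.span R (Set.range (adicMonomial d g)) = ⊤

theorem restrictScalars_ideal_span_eq_span_adicMonomial {d : σ → ℕ} (hd : ∀ i, 0 < d i)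
    {g : σ → MvPolynomial σ R}
    (hspan : Submodule.span R (Set.range (adicMonomial d g)) = ⊤) :
    (Ideal.span (Set.range g)).restrictScalars R =
      Submodule.span R (adicMonomial d g '' {s | ∃ i, d i ≤ s i}) := by
  apply le_antisymm
  · rw [← Submodule.span_smul_of_span_eq_top hspan, Submodule.span_le]
    rintro _ ⟨_, ⟨s, rfl⟩, _, ⟨i, rfl⟩, rfl⟩
    refine Submodule.subset_span ⟨s + Finsupp.single i (d i), ⟨i, by simp⟩, ?_⟩
    change _ = adicMonomial d g s * g i
    rw [mul_comm, mul_adicMonomial (hd i)]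
  · rw [Submodule.span_le]
    rintro _ ⟨s, ⟨i, hi⟩, rfl⟩
    exact adicMonomial_mem_span (hd i) g hi

theorem IsAdicBasis.finrank_quotient_span [Nontrivial R] {d : σ → ℕ} (hd : ∀ i, 0 < d i)
    {g : σ → MvPolynomial σ R} (hg : IsAdicBasis d g) :
    finrank R (MvPolynomial σ R ⧸ Ideal.span (Set.range g)) = ∏ i, d i := by
  let box (r : ∀ i, Fin (d i)) : σ →₀ ℕ := Finsupp.equivFunOnFinite.symm fun i => r i
  have hbox : Function.Injective box := fun r r' h =>
    funext fun i => Fin.ext (DFunLike.congr_fun h i)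
  have hrange : Set.range box = {s | ∃ i, d i ≤ s i}ᶜ := by
    ext s
    simp only [Set.mem_compl_iff, Set.mem_ofPred_eq, not_exists, not_le]
    refine ⟨?_, fun hs => ⟨fun i => ⟨s i, hs i⟩, Finsupp.ext fun i => rfl⟩⟩
    rintro ⟨r, rfl⟩ i
    exact (r i).2
  have hcompl : IsCompl ((Ideal.span (Set.range g)).restrictScalars R)
      (Submodule.span R (Set.range (adicMonomial d g ∘ box))) := by
    rw [restrictScalars_ideal_span_eq_span_adicMonomial hd hg.2, Set.range_comp, hrange]
    exact hg.1.isCompl_span_image hg.2 isCompl_compl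
  calc finrank R (MvPolynomial σ R ⧸ Ideal.span (Set.range g))
      = finrank R (Submodule.span R (Set.range (adicMonomial d g ∘ box))) :=
        (Submodule.quotientEquivOfIsCompl _ _ hcompl).finrank_eq
    _ = ∏ i, d i := by classical simp [finrank_span_eq_card (hg.1.comp box hbox)]

end adicMonomial

section coeffMatrix

variable {σ R : Type*} [CommRing R]

noncomputable instance [Finite σ] (m : ℕ) : Fintype {s : σ →₀ ℕ // s.degree ≤ m} :=
  @Fintype.ofFinite _ (Finsupp.finite_of_degree_le m)

/-- The coefficients in degrees `≤ m` of the polynomials `b s` with `s` of degree `≤ m`. The matrix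
is square, so a single determinant decides whether these `b s` are a basis in degrees `≤ m`. -/
noncomputable def coeffMatrix (b : (σ →₀ ℕ) → MvPolynomial σ R) (m : ℕ) :
    Matrix {s : σ →₀ ℕ // s.degree ≤ m} {s : σ →₀ ℕ // s.degree ≤ m} R :=
  .of fun s s' => (b s).coeff s'

variable [DecidableEq σ]

theorem coeffMatrix_monomial (m : ℕ) :
    coeffMatrix (fun s : σ →₀ ℕ => monomial s (1 : R)) m = 1 := by
  ext s s'
  simp [coeffMatrix, coeff_monomial, Matrix.one_apply, Subtype.ext_iff]

variable [Finite σ]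

theorem det_coeffMatrix_map {S : Type*} [CommRing S] (φ : R →+* S)
    (b : (σ →₀ ℕ) → MvPolynomial σ R) (m : ℕ) :
    (coeffMatrix (fun s => MvPolynomial.map φ (b s)) m).det = φ (coeffMatrix b m).det := by
  rw [RingHom.map_det]
  rfl

theorem linearIndependent_of_det_coeffMatrix_ne_zero [IsDomain R]
    {b : (σ →₀ ℕ) → MvPolynomial σ R}
    (hb : ∀ m, (coeffMatrix b m).det ≠ 0) : LinearIndependent R b := by
  rw [linearIndependent_iff_finset_linearIndependent]
  intro t
  let ι (s : t) : {s : σ →₀ ℕ // s.degree ≤ t.sup Finsupp.degree} := ⟨s, Finset.le_sup s.2⟩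
  have hrows := (Matrix.linearIndependent_rows_of_det_ne_zero (hb (t.sup Finsupp.degree))).comp ι
    fun s s' h => Subtype.ext (Subtype.mk.inj h)
  exact .of_comp (LinearMap.pi fun s' : {s : σ →₀ ℕ // s.degree ≤ t.sup Finsupp.degree} =>
    lcoeff R s'.1) hrows

theorem mem_span_of_isUnit_det_coeffMatrix {b : (σ →₀ ℕ) → MvPolynomial σ R}
    (hdeg : ∀ s, (b s).totalDegree ≤ s.degree) {m : ℕ}
    (hb : IsUnit (coeffMatrix b m).det) {p : MvPolynomial σ R} (hp : p.totalDegree ≤ m) :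
    p ∈ Submodule.span R (Set.range b) := by
  let coeffs : {s : σ →₀ ℕ // s.degree ≤ m} → R := fun s => p.coeff s
  let c := Matrix.vecMul coeffs (coeffMatrix b m)⁻¹
  have hc : Matrix.vecMul c (coeffMatrix b m) = coeffs := by
    simp only [c, Matrix.vecMul_vecMul, Matrix.nonsing_inv_mul _ hb, Matrix.vecMul_one]
  have hp_eq : p = ∑ s, c s • b s := by
    ext s'
    rw [coeff_sum]
    by_cases hs' : s'.degree ≤ m
    · exact (congrFun hc ⟨s', hs'⟩).symm.trans (by simp [Matrix.vecMul, dotProduct, coeffMatrix])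
    · have coeff_eq_zero {q : MvPolynomial σ R} (hq : q.totalDegree ≤ m) : q.coeff s' = 0 :=
        coeff_eq_zero_of_totalDegree_lt (hq.trans_lt (not_le.1 hs'))
      rw [coeff_eq_zero hp, Finset.sum_eq_zero fun s _ => ?_]
      rw [coeff_smul, coeff_eq_zero ((hdeg s).trans s.2), smul_zero]
  rw [hp_eq]
  exact Submodule.sum_mem _ fun s _ => Submodule.smul_mem _ _ (Submodule.subset_span ⟨s, rfl⟩)

end coeffMatrix

section perturbedPow

variable {σ R : Type*} [CommRing R]

/-- The perturbation `X i ^ d i + t * h i` of a pure power. With `d i` bounding the degree of `h i`,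
this moves the system `h` into general position. -/
noncomputable def perturbedPow (d : σ → ℕ) (h : σ → MvPolynomial σ R) (t : R) (i : σ) :
    MvPolynomial σ R :=
  X i ^ d i + C t * h i

theorem perturbedPow_zero (d : σ → ℕ) (h : σ → MvPolynomial σ R) :
    perturbedPow d h 0 = fun i => X i ^ d i :=
  funext fun i => by simp [perturbedPow]

theorem totalDegree_perturbedPow_le {d : σ → ℕ} {h : σ → MvPolynomial σ R} {i : σ}
    (hi : (h i).totalDegree ≤ d i) (t : R) : (perturbedPow d h t i).totalDegree ≤ d i := by
  refine (totalDegree_add _ _).trans (max_le ?_ ?_)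
  · simpa [X_pow_eq_monomial] using totalDegree_monomial_le (R := R) (Finsupp.single i (d i)) 1
  · rw [← smul_eq_C_mul]
    exact (totalDegree_smul_le _ _).trans hi

variable [Fintype σ]

theorem adicMonomial_perturbedPow_eq_map (d : σ → ℕ) (h : σ → MvPolynomial σ R)
    (t : R) (s : σ →₀ ℕ) : adicMonomial d (perturbedPow d h t) s = map (Polynomial.evalRingHom t)
      (adicMonomial d (perturbedPow d (fun i => map Polynomial.C (h i)) Polynomial.X) s) := by
  have eval_comp_C : (Polynomial.evalRingHom t).comp Polynomial.C = RingHom.id R :=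
    RingHom.ext fun r => Polynomial.eval_C
  simp only [map_adicMonomial, perturbedPow, map_add, map_mul, map_pow, map_X, map_C, map_map,
    eval_comp_C, MvPolynomial.map_id, Polynomial.coe_evalRingHom, Polynomial.eval_X]
  rfl

/-- The obstruction in each degree is a determinant, polynomial in `t`, with value `1` at `0`. -/
theorem countable_setOf_not_isAdicBasis_perturbedPow {K : Type*} [Field K] {d : σ → ℕ}
    {h : σ → MvPolynomial σ K} (hh : ∀ i, (h i).totalDegree ≤ d i) :
    {t : K | ¬ IsAdicBasis d (perturbedPow d h t)}.Countable := by
  classical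
  let D (m : ℕ) : Polynomial K := (coeffMatrix
    (adicMonomial d (perturbedPow d (fun i => map Polynomial.C (h i)) Polynomial.X)) m).det
  have eval_D (t : K) (m : ℕ) :
      (coeffMatrix (adicMonomial d (perturbedPow d h t)) m).det = (D m).eval t := by
    rw [funext (adicMonomial_perturbedPow_eq_map d h t), det_coeffMatrix_map]
    rfl
  have D_ne_zero (m : ℕ) : D m ≠ 0 := fun hD => by
    have at_zero : adicMonomial d (perturbedPow d h 0) = fun s => monomial s 1 := by
      rw [perturbedPow_zero]
      exact funext (adicMonomial_X_pow d)
    have := eval_D 0 m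
    rw [at_zero, coeffMatrix_monomial, Matrix.det_one, hD, Polynomial.eval_zero] at this
    exact one_ne_zero this
  have hcount : (⋃ m, {t | (D m).IsRoot t}).Countable :=
    Set.countable_iUnion fun m => (Polynomial.finite_setOfPred_isRoot (D_ne_zero m)).countable
  refine hcount.mono fun t ht => ?_
  by_contra hroot
  have hdet (m : ℕ) : (coeffMatrix (adicMonomial d (perturbedPow d h t)) m).det ≠ 0 := by
    rw [eval_D]
    exact fun h0 => hroot (Set.mem_iUnion.2 ⟨m, h0⟩)
  refine ht ⟨linearIndependent_of_det_coeffMatrix_ne_zero hdet, eq_top_iff.2 fun p _ => ?_⟩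
  exact mem_span_of_isUnit_det_coeffMatrix
    (totalDegree_adicMonomial_le fun i => totalDegree_perturbedPow_le (hh i) t)
    (hdet p.totalDegree).isUnit le_rfl

end perturbedPow

theorem exists_gt_forall_pow_add_mul_eval_eq_zero {σ : Type*} [Finite σ] {d : σ → ℕ}
    (hd : ∀ i, Odd (d i)) {h : σ → MvPolynomial σ ℝ} (hh : ∀ i, (h i).totalDegree ≤ d i) (T : ℝ) :
    ∃ t > T, ∃ a : σ → ℝ, ∀ i, a i ^ d i + t * eval a (h i) = 0 := by
  cases nonempty_fintype σ
  obtain ⟨t, hbasis, htT⟩ :=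
    ((countable_setOf_not_isAdicBasis_perturbedPow hh).dense_compl ℝ).exists_gt T
  have hodd : Odd (finrank ℝ (MvPolynomial σ ℝ ⧸ Ideal.span (Set.range (perturbedPow d h t)))) := by
    rw [(not_not.1 hbasis).finrank_quotient_span fun i => (hd i).pos]
    exact Finset.prod_induction _ Odd (fun _ _ => Odd.mul) odd_one fun i _ => hd i
  obtain ⟨φ⟩ := nonempty_algHom_real_of_odd_finrank _ hodd
  let ψ : MvPolynomial σ ℝ →ₐ[ℝ] ℝ := φ.comp (Ideal.Quotient.mkₐ ℝ _)
  refine ⟨t, htT, fun i => ψ (X i), fun i => ?_⟩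
  have hψ : ψ (perturbedPow d h t i) = 0 := by
    have hmem : perturbedPow d h t i ∈ Ideal.span (Set.range (perturbedPow d h t)) :=
      Ideal.subset_span ⟨i, rfl⟩
    simp only [ψ, AlgHom.comp_apply, Ideal.Quotient.mkₐ_eq_mk,
      Ideal.Quotient.eq_zero_iff_mem.2 hmem, map_zero]
  rw [← hψ, perturbedPow, map_add, map_mul, map_pow, ← algebraMap_eq, AlgHom.commutes]
  exact congrArg (ψ (X i) ^ d i + t * ·) (DFunLike.congr_fun (aeval_unique ψ).symm (h i))

/-! ### The Borsuk–Ulam theorem -/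

theorem eval_smul_of_isHomogeneous {σ R : Type*} [CommSemiring R] {f : MvPolynomial σ R} {n : ℕ}
    (hf : f.IsHomogeneous n) (c : R) (x : σ → R) : eval (c • x) f = c ^ n * eval x f := by
  simp only [eval_eq, Finset.mul_sum, Pi.smul_apply, smul_eq_mul, mul_pow,
    Finset.prod_mul_distrib, Finset.prod_pow_eq_pow_sum]
  refine Finset.sum_congr rfl fun s hs => ?_
  rw [hf.degree_eq_sum_deg_support hs]
  ring

theorem totalDegree_aeval_le_of_totalDegree_le_one {σ τ R : Type*} [CommSemiring R]
    {g : σ → MvPolynomial τ R} (hg : ∀ i, (g i).totalDegree ≤ 1) (f : MvPolynomial σ R) :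
    (aeval g f).totalDegree ≤ f.totalDegree := by
  rw [aeval_def, eval₂_eq]
  refine totalDegree_finsetSum_le fun s hs => (totalDegree_mul _ _).trans ?_
  rw [algebraMap_eq, totalDegree_C, zero_add]
  refine (totalDegree_finsetProd _ _).trans (le_trans ?_ (le_totalDegree hs))
  refine Finset.sum_le_sum fun i _ => (totalDegree_pow _ _).trans ?_
  exact (Nat.mul_le_mul_left _ (hg i)).trans_eq (mul_one _)

theorem exists_isHomogeneous_two_mul_eval_eq_sub {ι R : Type*} [Fintype ι] [CommRing R]
    (p : MvPolynomial ι R) : ∃ d, Odd d ∧ ∃ f : MvPolynomial ι R, f.IsHomogeneous d ∧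
      ∀ x, ∑ i, x i ^ 2 = 1 → 2 * eval x f = eval x p - eval (-x) p := by
  let r : MvPolynomial ι R := ∑ i, X i ^ 2
  have hr : r.IsHomogeneous 2 := .sum _ _ _ fun i _ => isHomogeneous_X_pow i 2
  let d := 2 * p.totalDegree + 1
  let J := (Finset.range (p.totalDegree + 1)).filter Odd
  refine ⟨d, odd_two_mul_add_one _, ∑ j ∈ J, homogeneousComponent j p * r ^ ((d - j) / 2),
    .sum _ _ _ fun j hj => ?_, fun x hx => ?_⟩
  · obtain ⟨hjp, k, rfl⟩ := Finset.mem_filter.1 hj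
    have : d = 2 * k + 1 + 2 * ((d - (2 * k + 1)) / 2) := by
      have := Finset.mem_range.1 hjp
      omega
    nth_rw 2 [this]
    exact (homogeneousComponent_isHomogeneous _ p).mul (hr.pow _)
  · have eval_r : eval x r = 1 := by simpa [r] using hx
    have eval_neg (j : ℕ) : eval (-x) (homogeneousComponent j p) =
        (-1) ^ j * eval x (homogeneousComponent j p) := by
      rw [← eval_smul_of_isHomogeneous (homogeneousComponent_isHomogeneous j p), neg_one_smul]
    conv_rhs => rw [← sum_homogeneousComponent p]
    simp only [map_sum, eval_neg, J, Finset.sum_filter, Finset.mul_sum, ← Finset.sum_sub_distrib]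
    refine Finset.sum_congr rfl fun j _ => ?_
    rcases Nat.even_or_odd j with hj | hj
    · simp [hj.neg_one_pow, Nat.not_odd_iff_even.2 hj]
    · simp [hj.neg_one_pow, hj, eval_r, two_mul]

theorem exists_mvPolynomial_near_of_continuousOn {ι : Type*} {s : Set (EuclideanSpace ℝ ι)}
    (hs : IsCompact s) {g : EuclideanSpace ℝ ι → ℝ} (hg : ContinuousOn g s) {ε : ℝ} (hε : 0 < ε) :
    ∃ p : MvPolynomial ι ℝ, ∀ x ∈ s, |eval x p - g x| < ε := by
  have := isCompact_iff_compactSpace.1 hs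
  let coord (i : ι) : C(s, ℝ) := ⟨fun x => x.1 i, by fun_prop⟩
  have hsep : (aeval (R := ℝ) coord).range.SeparatesPoints := fun x y hxy => by
    obtain ⟨i, hi⟩ : ∃ i, x.1 i ≠ y.1 i := by
      by_contra! h
      exact hxy (Subtype.ext (PiLp.ext h))
    exact ⟨coord i, ⟨coord i, ⟨X i, aeval_X _ _⟩, rfl⟩, hi⟩
  obtain ⟨⟨_, p, rfl⟩, hp⟩ :=
    ContinuousMap.exists_mem_subalgebra_near_continuous_of_separatesPoints _ hsep _
      (continuousOn_iff_continuous_domRestrict.1 hg) ε hε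
  refine ⟨p, fun x hx => ?_⟩
  have eval_coord : aeval coord p ⟨x, hx⟩ = eval x p :=
    comp_aeval_apply coord (ContinuousMap.evalAlgHom ℝ ℝ ⟨x, hx⟩) p
  simpa [eval_coord] using hp ⟨x, hx⟩

theorem exists_isHomogeneous_odd_near {ι : Type*} [Fintype ι] {g : EuclideanSpace ℝ ι → ℝ}
    (hg : ContinuousOn g (Metric.sphere 0 1)) (hodd : ∀ x ∈ Metric.sphere 0 1, g (-x) = -g x)
    {ε : ℝ} (hε : 0 < ε) : ∃ d, Odd d ∧ ∃ f : MvPolynomial ι ℝ, f.IsHomogeneous d ∧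
      ∀ x ∈ Metric.sphere (0 : EuclideanSpace ℝ ι) 1, |eval x f - g x| < ε := by
  obtain ⟨p, hp⟩ := exists_mvPolynomial_near_of_continuousOn (isCompact_sphere 0 1) hg hε
  obtain ⟨d, hd, f, hf, hfp⟩ := exists_isHomogeneous_two_mul_eval_eq_sub p
  refine ⟨d, hd, f, hf, fun x hx => ?_⟩
  have hx' : -x ∈ Metric.sphere (0 : EuclideanSpace ℝ ι) 1 := by simpa using hx
  have hsum : ∑ i, x i ^ 2 = 1 := by
    simpa [EuclideanSpace.norm_eq] using hx
  have h1 := abs_lt.1 (hp x hx)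
  have h2 := abs_lt.1 (hp (-x) hx')
  have h3 := hfp x hsum
  rw [hodd x hx, WithLp.ofLp_neg] at h2
  rw [abs_lt]
  constructor <;> linarith

theorem exists_mem_sphere_forall_abs_eval_le {n : ℕ} {d : Fin n → ℕ} (hd : ∀ i, Odd (d i))
    {f : Fin n → MvPolynomial (Fin (n + 1)) ℝ} (hf : ∀ i, (f i).IsHomogeneous (d i))
    {ε : ℝ} (hε : 0 < ε) :
    ∃ y ∈ Metric.sphere (0 : EuclideanSpace ℝ (Fin (n + 1))) 1, ∀ i, |eval y (f i)| ≤ ε := by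
  let Z : Fin (n + 1) → MvPolynomial (Fin n) ℝ := Fin.cons 1 X
  have hZ (i) : (Z i).totalDegree ≤ 1 := by
    refine Fin.cases ?_ (fun j => ?_) i
    · simp [Z]
    · simp [Z]
  have hdeg (i) : (aeval Z (f i)).totalDegree ≤ d i :=
    (totalDegree_aeval_le_of_totalDegree_le_one hZ _).trans (hf i).totalDegree_le
  obtain ⟨t, ht, a, ha⟩ := exists_gt_forall_pow_add_mul_eval_eq_zero hd hdeg (1 / ε)
  let z : EuclideanSpace ℝ (Fin (n + 1)) := WithLp.toLp 2 (Fin.cons 1 a)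
  have eval_z (i) : eval z (f i) = eval a (aeval Z (f i)) := by
    rw [← aeval_eq_eval, ← aeval_eq_eval]
    refine DFunLike.congr_fun (algHom_ext (f := aeval z) (g := (aeval a).comp (aeval Z)) ?_) (f i)
    refine Fin.cases ?_ fun j => ?_ <;> simp [Z, z]
  have hz : z ≠ 0 := fun h => one_ne_zero (congrArg (· 0) h)
  refine ⟨‖z‖⁻¹ • z, by simp [norm_smul, hz], fun i => ?_⟩
  set y := ‖z‖⁻¹ • z with hy
  have hnorm : ‖y‖ = 1 := by simp [y, norm_smul, hz]
  have hy_eq : y i.succ ^ d i + t * eval y (f i) = 0 := by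
    rw [hy, WithLp.ofLp_smul, eval_smul_of_isHomogeneous (hf i), eval_z]
    calc _ = ‖z‖⁻¹ ^ d i * (a i ^ d i + t * eval a (aeval Z (f i))) := by simp [z, mul_pow]; ring
      _ = 0 := by rw [ha, mul_zero]
  have hyi : |y i.succ| ≤ 1 := hnorm ▸ PiLp.norm_apply_le y i.succ
  have htpos : 0 < t := (one_div_pos.2 hε).trans ht
  calc |eval y (f i)| = |y i.succ| ^ d i / t := by
        rw [← abs_pow, eq_neg_of_add_eq_zero_left hy_eq, abs_neg, abs_mul, abs_of_pos htpos]
        field_simp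
    _ ≤ 1 / t := by gcongr; exact pow_le_one₀ (abs_nonneg _) hyi
    _ ≤ ε := (one_div_lt hε htpos).1 ht |>.le

theorem exists_mem_sphere_eq_zero_of_odd {n : ℕ} {f : EuclideanSpace ℝ (Fin (n + 1)) → Fin n → ℝ}
    (hf : ContinuousOn f (Metric.sphere 0 1)) (hodd : ∀ x ∈ Metric.sphere 0 1, f (-x) = -f x) :
    ∃ x ∈ Metric.sphere 0 1, f x = 0 := by
  obtain ⟨x, hx, hmin⟩ := (isCompact_sphere 0 1).exists_isMinOn
    (NormedSpace.sphere_nonempty.2 zero_le_one) hf.norm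
  refine ⟨x, hx, ?_⟩
  by_contra hne
  have hδ : 0 < ‖f x‖ / 3 := div_pos (norm_pos_iff.2 hne) three_pos
  choose d hd F hF hnear using fun i => exists_isHomogeneous_odd_near
    (continuousOn_pi.1 hf i) (fun x hx => congrFun (hodd x hx) i) hδ
  obtain ⟨y, hy, hFy⟩ := exists_mem_sphere_forall_abs_eval_le hd hF hδ
  have hfy : ‖f y‖ ≤ 2 * (‖f x‖ / 3) := by
    refine (pi_norm_le_iff_of_nonneg (by positivity)).2 fun i => ?_
    calc |f y i| = |eval y (F i) - (eval y (F i) - f y i)| := by rw [sub_sub_cancel]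
      _ ≤ |eval y (F i)| + |eval y (F i) - f y i| := abs_sub _ _
      _ ≤ 2 * (‖f x‖ / 3) := by linarith [hFy i, hnear i y hy]
  linarith [isMinOn_iff.1 hmin y hy]

/-! ### Widths in topological vector spaces -/

section seminorm

variable {V : Type*} [AddCommGroup V] [Module ℝ V] [TopologicalSpace V] [IsTopologicalAddGroup V]
  [ContinuousSMul ℝ V]

theorem exists_seminorm_eq_and_map_eq_map_neg (p : Seminorm ℝ V) {Y : Submodule ℝ V} {n : ℕ}
    (hY : finrank ℝ Y = n + 1) (hp : ∀ s ∈ Y, p s = 0 → s = 0) {ρ : ℝ} (hρ : 0 ≤ ρ)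
    {S : V → Fin n → ℝ} (hS : ContinuousOn S {s | s ∈ Y ∧ p s = ρ}) :
    ∃ s ∈ Y, p s = ρ ∧ S s = S (-s) := by
  have : Module.Finite ℝ Y := finite_of_finrank_pos (by omega)
  let e : EuclideanSpace ℝ (Fin (n + 1)) ≃ₗ[ℝ] Y :=
    LinearEquiv.ofFinrankEq _ _ (by rw [finrank_euclideanSpace_fin, hY])
  let F : EuclideanSpace ℝ (Fin (n + 1)) →ₗ[ℝ] V := Y.subtype ∘ₗ e
  have hpF_cont : Continuous fun x => p (F x) :=
    continuousOn_univ.1 ((p.comp F).convexOn.continuousOn isOpen_univ)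
  have hpF_ne {x} (hx : x ∈ Metric.sphere (0 : EuclideanSpace ℝ (Fin (n + 1))) 1) :
      p (F x) ≠ 0 := fun h => by
    have : e x = 0 := Subtype.ext (hp _ (e x).2 h)
    exact ne_zero_of_mem_unit_sphere ⟨x, hx⟩ (e.map_eq_zero_iff.1 this)
  let u (x : EuclideanSpace ℝ (Fin (n + 1))) : V := F ((ρ / p (F x)) • x)
  have hu_neg (x) : u (-x) = -u x := by simp only [u, map_neg, map_neg_eq_map, smul_neg]
  have hu_mem {x} (hx : x ∈ Metric.sphere 0 1) : u x ∈ Y ∧ p (u x) = ρ := by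
    refine ⟨(e _).2, ?_⟩
    calc p (u x) = ‖ρ / p (F x)‖ * p (F x) := by simp only [u, map_smul, map_smul_eq_mul]
      _ = ρ := by rw [Real.norm_of_nonneg (by positivity), div_mul_cancel₀ _ (hpF_ne hx)]
  have hu_cont : ContinuousOn u (Metric.sphere 0 1) :=
    F.continuous_of_finiteDimensional.comp_continuousOn
      ((continuousOn_const.div hpF_cont.continuousOn fun x => hpF_ne).smul continuousOn_id)
  have hSu : ContinuousOn (fun x => S (u x)) (Metric.sphere 0 1) := hS.comp hu_cont fun x => hu_mem
  have hSu_neg : ContinuousOn (fun x => S (u (-x))) (Metric.sphere 0 1) :=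
    hSu.comp continuousOn_neg fun x hx => by simpa using hx
  obtain ⟨x, hx, hzero⟩ := exists_mem_sphere_eq_zero_of_odd (hSu.sub hSu_neg) fun x _ => by
    simp
  exact ⟨u x, (hu_mem hx).1, (hu_mem hx).2, by rw [← hu_neg]; exact sub_eq_zero.1 hzero⟩

theorem stmt_15_general (p : Seminorm ℝ V) {K : Set V} {Y : Submodule ℝ V} {M : ℕ}
    (hY : finrank ℝ Y = M + 1) (hp : ∀ s ∈ Y, p s = 0 → s = 0) {ρ : ℝ} (hρ : 0 ≤ ρ)
    (hYK : ∀ s ∈ Y, p s = ρ → s ∈ K) {S : V → Fin M → ℝ} (hS : ContinuousOn S K)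
    (A : (Fin M → ℝ) → V) : ∃ s ∈ K, ρ ≤ p (A (S s) - s) := by
  obtain ⟨s, hsY, hps, hSs⟩ := exists_seminorm_eq_and_map_eq_map_neg p hY hp hρ
    (hS.mono fun s hs => hYK s hs.1 hs.2)
  have triangle : ρ + ρ ≤ p (A (S s) - s) + p (A (S s) - -s) :=
    calc ρ + ρ = p ((2 : ℝ) • s) := by rw [map_smul_eq_mul, hps, Real.norm_two, two_mul]
      _ = p ((A (S s) - -s) - (A (S s) - s)) := by rw [two_smul]; congr 1; abel
      _ ≤ p (A (S s) - -s) + p (A (S s) - s) := map_sub_le_add _ _ _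
      _ = _ := add_comm _ _
  rcases le_or_le_of_add_le_add triangle with h | h
  · exact ⟨s, hYK s hsY hps, h⟩
  · exact ⟨-s, hYK (-s) (Y.neg_mem hsY) (by rw [map_neg_eq_map, hps]), hSs ▸ h⟩

end seminorm

/-! ### The weak-star topology as a vector space topology -/

section sint

variable {X : Type*} [MeasurableSpace X]

theorem sint_eq_integral_sub_integral {s : SignedMeasure X} {μ ν : Measure X}
    [IsFiniteMeasure μ] [IsFiniteMeasure ν]
    (hs : s = μ.toSignedMeasure - ν.toSignedMeasure) {f : X → ℝ}
    (hf : ∀ m : Measure X, IsFiniteMeasure m → Integrable f m) :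
    sint s f = ∫ x, f x ∂μ - ∫ x, f x ∂ν := by
  let j := s.toJordanDecomposition
  have hj : j.posPart.toSignedMeasure - j.negPart.toSignedMeasure =
      μ.toSignedMeasure - ν.toSignedMeasure := hs ▸ s.toSignedMeasure_toJordanDecomposition
  have measure_eq : j.posPart + ν = μ + j.negPart := by
    rw [← Measure.toSignedMeasure_eq_toSignedMeasure_iff, Measure.toSignedMeasure_add,
      Measure.toSignedMeasure_add]
    exact sub_eq_sub_iff_add_eq_add.1 hj
  have integral_eq := congrArg (fun m => ∫ x, f x ∂m) measure_eq
  simp only [integral_add_measure (hf _ inferInstance) (hf _ inferInstance)] at integral_eq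
  exact sub_eq_sub_iff_add_eq_add.2 integral_eq

theorem sint_add (s t : SignedMeasure X) {f : X → ℝ}
    (hf : ∀ m : Measure X, IsFiniteMeasure m → Integrable f m) :
    sint (s + t) f = sint s f + sint t f := by
  let js := s.toJordanDecomposition
  let jt := t.toJordanDecomposition
  have hst : s + t = (js.posPart + jt.posPart).toSignedMeasure -
      (js.negPart + jt.negPart).toSignedMeasure := by
    rw [Measure.toSignedMeasure_add, Measure.toSignedMeasure_add, add_sub_add_comm]
    exact congrArg₂ _ s.toSignedMeasure_toJordanDecomposition.symm
      t.toSignedMeasure_toJordanDecomposition.symm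
  rw [sint_eq_integral_sub_integral hst hf,
    integral_add_measure (hf _ inferInstance) (hf _ inferInstance),
    integral_add_measure (hf _ inferInstance) (hf _ inferInstance), add_sub_add_comm]
  rfl

theorem sint_smul (c : ℝ) (s : SignedMeasure X) (f : X → ℝ) : sint (c • s) f = c * sint s f := by
  rw [sint, sint, s.toJordanDecomposition_smul_real]
  rcases le_or_gt 0 c with hc | hc
  · rw [JordanDecomposition.real_smul_posPart_nonneg _ _ hc,
      JordanDecomposition.real_smul_negPart_nonneg _ _ hc, integral_smul_nnreal_measure,
      integral_smul_nnreal_measure, ← smul_sub, NNReal.smul_def,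
      Real.coe_toNNReal _ hc, smul_eq_mul]
  · rw [JordanDecomposition.real_smul_posPart_neg _ _ hc,
      JordanDecomposition.real_smul_negPart_neg _ _ hc, integral_smul_nnreal_measure,
      integral_smul_nnreal_measure, ← smul_sub, NNReal.smul_def,
      Real.coe_toNNReal _ (neg_nonneg.2 hc.le), smul_eq_mul, neg_mul, ← mul_neg, neg_sub]

end sint

section wstar

variable (X : Type*) [MeasurableSpace X] [TopologicalSpace X] [CompactSpace X]
  [OpensMeasurableSpace X]

/-- The pairing of signed measures with continuous functions, as a linear map; it induces the
weak-star topology. -/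
noncomputable def sintLinearMap : SignedMeasure X →ₗ[ℝ] C(X, ℝ) → ℝ where
  toFun s g := sint s (fun x => g x)
  map_add' s t := funext fun g => sint_add s t fun m _ =>
    (BoundedContinuousFunction.mkOfCompact g).integrable m
  map_smul' c s := funext fun g => sint_smul c s g

theorem isTopologicalAddGroup_wstar : @IsTopologicalAddGroup _ (wstar X) _ :=
  topologicalAddGroup_induced (sintLinearMap X)

theorem continuousSMul_wstar : @ContinuousSMul ℝ (SignedMeasure X) _ _ (wstar X) :=
  continuousSMul_induced (sintLinearMap X)

end wstar

theorem stmt_15 {X : Type*} [MetricSpace X] [CompactSpace X] [MeasurableSpace X] [BorelSpace X]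
    (N : SignedMeasure X → ℝ)
    (hN1 : ∀ s t, N (s + t) ≤ N s + N t)
    (hN2 : ∀ (a : ℝ) (s : SignedMeasure X), N (a • s) = |a| * N s)
    (hN3 : ∀ s, N s = 0 → s = 0)
    (K : Set (SignedMeasure X))
    (hKc : @IsCompact _ (wstar X) K)
    (hsym : ∀ s ∈ K, -s ∈ K) (hconv : Convex ℝ K)
    (hNcont : @ContinuousOn _ _ (wstar X) _ N K)
    (M : ℕ) (Y : Submodule ℝ (SignedMeasure X)) (hY : Module.finrank ℝ Y = M + 1)
    (ρ : ℝ) (hρ : 0 < ρ)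
    (hYK : ∀ s ∈ Y, N s ≤ ρ → s ∈ K)
    (S : SignedMeasure X → (Fin M → ℝ))
    (hS : @ContinuousOn _ _ (wstar X) _ S K)
    (A : (Fin M → ℝ) → SignedMeasure X) :
    ∃ s ∈ K, ρ ≤ N (A (S s) - s) := by
  let := wstar X
  have := isTopologicalAddGroup_wstar X
  have := continuousSMul_wstar X
  exact stmt_15_general (Seminorm.of N hN1 hN2) hY (fun s _ => hN3 s) hρ.le
    (fun s hs h => hYK s hs h.le) hS A
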